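/- arXiv:2507.07076 — 4 statements merged into one kernel-verified Lean document; each statement's English description precedes it below -/
import Mathlib

section
/- Let a > 0, b > 1, k ≥ 1 and let D ≥ 2 be an integer. Then there exists a' > 0, depending only on a, b, k and D, such that, with b' = b^{1/k} > 1, the following holds. Let Γ₁ and Γ₂ be connected simple graphs with graph metrics d₁ and d₂. Assume every vertex of Γ₁ has degree at most D, that Γ₂ is locally finite, and that Γ₁ has exponential growth with parameters (a,b), i.e. for every vertex u of Γ₁ and every integer n ≥ 1 the ball B₁(u,n) contains at least a·bⁿ vertices. Let φ: V(Γ₁) → V(Γ₂) be a k-quasiisometric embedding (with respect to d₁ and d₂), and let v be a vertex of Γ₂ with d₂(φ(u), v) ≤ k for some vertex u of Γ₁. Then for every integer m ≥ 1, the ball B₂(v,m) in Γ₂ contains at least a'·(b')^m vertices. -/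
/-!
A quasiisometric embedding maps the ball `B(u, n)` into a ball `B(v, m)` with `m ≈ k * n`. Two
points with the same image are at distance at most `k ^ 2`, so in a graph of bounded valence the
fibres have uniformly bounded cardinality `N`. Hence `B(v, m)` has at least `|B(u, n)| / N` points,
and `b ^ n ≈ (b ^ (1 / k)) ^ m`. The radii `m` too small to allow `n ≥ 1` only cost a constant,
because `B(v, m)` is nonempty.
-/

open Metric Set

theorem encard_biUnion_le_encard_mul {ι α : Type*} {s : Set ι} {t : ι → Set α} {c : ℕ∞}
    (hs : s.Finite) (ht : ∀ i ∈ s, (t i).encard ≤ c) :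
    (⋃ i ∈ s, t i).encard ≤ s.encard * c := by
  calc (⋃ i ∈ s, t i).encard
      = (⋃ i ∈ hs.toFinset, t i).encard := by simp only [hs.mem_toFinset]
    _ ≤ ∑ i ∈ hs.toFinset, (t i).encard := hs.toFinset.set_encard_biUnion_le t
    _ ≤ hs.toFinset.card • c :=
        Finset.sum_le_card_nsmul _ _ _ fun i hi => ht i (hs.mem_toFinset.1 hi)
    _ = s.encard * c := by rw [nsmul_eq_mul, hs.encard_eq_coe_toFinset_card]

theorem encard_le_encard_mul_of_mapsTo {α β : Type*} {s : Set α} {t : Set β} {φ : α → β} {c : ℕ∞}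
    (ht : t.Finite) (hst : MapsTo φ s t) (hφ : ∀ y, (φ ⁻¹' {y}).encard ≤ c) :
    s.encard ≤ t.encard * c := by
  have cover : s ⊆ ⋃ y ∈ t, φ ⁻¹' {y} := fun x hx => mem_biUnion (hst hx) rfl
  exact (encard_le_encard cover).trans (encard_biUnion_le_encard_mul ht fun y _ => hφ y)

section Metric

variable {X Y : Type*} [PseudoMetricSpace X] [PseudoMetricSpace Y] {φ : X → Y} {L C : ℝ}

theorem dist_apply_le_of_coarse_lipschitz {c : ℝ} {u : X} {v : Y}
    (hφ : ∀ x y, dist (φ x) (φ y) ≤ L * dist x y + C) (huv : dist (φ u) v ≤ c) (x : X) :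
    dist (φ x) v ≤ L * dist x u + (C + c) := by
  linarith [dist_triangle (φ x) (φ u) v, hφ x u]

theorem mapsTo_closedBall_of_dist_le {u : X} {v : Y} {r R : ℝ} (hL : 0 ≤ L)
    (hφ : ∀ x, dist (φ x) v ≤ L * dist x u + C) (hR : L * r + C ≤ R) :
    MapsTo φ (closedBall u r) (closedBall v R) := fun x hx =>
  calc dist (φ x) v ≤ L * dist x u + C := hφ x
    _ ≤ L * r + C := by gcongr; exact hx
    _ ≤ R := hR

theorem encard_preimage_singleton_le_of_le_dist {c : ℕ∞} (hL : 0 < L)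
    (hφ : ∀ x y, 1 / L * dist x y - C ≤ dist (φ x) (φ y))
    (hc : ∀ x : X, (closedBall x (L * C)).encard ≤ c) (y : Y) :
    (φ ⁻¹' {y}).encard ≤ c := by
  rcases (φ ⁻¹' {y}).eq_empty_or_nonempty with hempty | ⟨x₀, hx₀⟩
  · simp [hempty]
  · refine (encard_le_encard fun x hx => ?_).trans (hc x₀)
    have hdist := hφ x x₀
    rw [show φ x = φ x₀ from hx.trans hx₀.symm, dist_self, sub_nonpos, one_div_mul_eq_div,
      div_le_iff₀' hL] at hdist
    exact hdist

theorem stmt2_general {a b : ℝ} {N : ℕ} {u : X} {v : Y} (ha : 0 ≤ a) (hb : 1 ≤ b) (hL : 0 < L)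
    (hφ : ∀ x, dist (φ x) v ≤ L * dist x u + C) (hfibre : ∀ y, (φ ⁻¹' {y}).encard ≤ N)
    (hgrowth : ∀ n : ℕ, 1 ≤ n → a * b ^ n ≤ ((closedBall u n).ncard : ℝ))
    {r : ℝ} (hr : 0 ≤ r) (hfin : (closedBall v r).Finite) :
    min 1 (a / N) * b ^ (-(1 + C / L)) * b ^ (r / L) ≤ ((closedBall v r).ncard : ℝ) := by
  have hb₀ : 0 < b := by linarith
  rw [mul_assoc, ← Real.rpow_add hb₀]
  have hexp : -(1 + C / L) + r / L = (r - C) / L - 1 := by ring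
  rw [hexp]
  -- The radius `n = ⌊(r - C) / L⌋` is the largest with `φ (B(u, n)) ⊆ B(v, r)` guaranteed.
  rcases lt_or_ge ((r - C) / L) 1 with hsmall | hlarge
  · have hne : (1 : ℝ) ≤ (closedBall v r).ncard := by
      exact_mod_cast (ncard_pos hfin).2 ⟨v, mem_closedBall_self hr⟩
    calc min 1 (a / N) * b ^ ((r - C) / L - 1) ≤ 1 * 1 := by
          gcongr
          · exact min_le_left _ _
          · exact Real.rpow_le_one_of_one_le_of_nonpos hb (by linarith)
      _ ≤ (closedBall v r).ncard := by simpa using hne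
  · set n := ⌊(r - C) / L⌋₊
    have hn : L * n + C ≤ r := by
      have := (le_div_iff₀' hL).1 (Nat.floor_le (zero_le_one.trans hlarge))
      linarith
    have hcard : ((closedBall u (n : ℝ)).ncard : ℝ) ≤ (closedBall v r).ncard * N := by
      have h := encard_le_encard_mul_of_mapsTo hfin
        (mapsTo_closedBall_of_dist_le hL.le hφ hn) hfibre
      rw [← hfin.cast_ncard_eq] at h
      exact_mod_cast (encard_le_coe_iff_finite_ncard_le.1 (mod_cast h)).2
    calc min 1 (a / N) * b ^ ((r - C) / L - 1) ≤ a / N * b ^ (n : ℝ) := by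
          gcongr
          · exact min_le_right _ _
          · exact (Nat.sub_one_lt_floor _).le
      _ = a * b ^ n / N := by rw [Real.rpow_natCast]; ring
      _ ≤ (closedBall v r).ncard := div_le_of_le_mul₀ (by positivity) (by positivity)
          ((hgrowth n (Nat.le_floor (mod_cast hlarge))).trans hcard)

end Metric

section Graph

variable {V : Type*} {G : SimpleGraph V}

theorem ball_succ_subset_biUnion_insert_neighborSet (u : V) (n : ℕ) :
    G.ball u ((n + 1 : ℕ) + 1) ⊆ ⋃ w ∈ G.ball u (n + 1), insert w (G.neighborSet w) := by
  intro v hv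
  rw [SimpleGraph.mem_ball] at hv
  obtain ⟨p, hp⟩ := SimpleGraph.exists_walk_of_edist_ne_top hv.ne_top
  rw [← hp] at hv
  cases p with
  | nil => exact mem_biUnion (SimpleGraph.mem_ball_self (by simp)) (mem_insert _ _)
  | @cons _ w _ hadj q =>
    have hq : q.length < n + 1 := by
      rw [SimpleGraph.Walk.length_cons] at hv
      exact Nat.lt_of_succ_lt_succ (by exact_mod_cast hv)
    exact mem_biUnion (q.edist_le.trans_lt (by exact_mod_cast hq))
      (mem_insert_of_mem _ hadj.symm)

theorem ball_add_one_finite (hG : ∀ v, (G.neighborSet v).Finite) (u : V) (n : ℕ) :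
    (G.ball u (n + 1)).Finite := by
  induction n with
  | zero => simp
  | succ n ih =>
    exact (ih.biUnion fun w _ => (hG w).insert w).subset
      (ball_succ_subset_biUnion_insert_neighborSet u n)

theorem encard_ball_add_one_le_pow {D : ℕ} (hG : ∀ v, (G.neighborSet v).encard ≤ D) (u : V)
    (n : ℕ) : (G.ball u (n + 1)).encard ≤ ((D + 1) ^ n : ℕ) := by
  induction n with
  | zero => simp
  | succ n ih =>
    have hstar (w : V) : (insert w (G.neighborSet w)).encard ≤ (D + 1 : ℕ) :=
      (encard_insert_le _ _).trans (by push_cast; gcongr; exact hG w)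
    calc (G.ball u ((n + 1 : ℕ) + 1)).encard
        ≤ (⋃ w ∈ G.ball u (n + 1), insert w (G.neighborSet w)).encard :=
          encard_le_encard (ball_succ_subset_biUnion_insert_neighborSet u n)
      _ ≤ (G.ball u (n + 1)).encard * (D + 1 : ℕ) :=
          encard_biUnion_le_encard_mul (finite_of_encard_le_coe ih) fun w _ => hstar w
      _ ≤ ((D + 1) ^ n : ℕ) * (D + 1 : ℕ) := by gcongr
      _ = ((D + 1) ^ (n + 1) : ℕ) := by rw [pow_succ, Nat.cast_mul]

/-- The graph metric of a connected graph, through which statements about metric spaces apply to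
its vertices. It is not an instance, since a type carries many graphs, and connectedness is needed
because `SimpleGraph.dist` is `0` between different components. -/
noncomputable abbrev graphMetricSpace (hG : G.Connected) : MetricSpace V where
  dist u v := G.dist u v
  dist_self u := by simp
  dist_comm u v := by rw [SimpleGraph.dist_comm]
  dist_triangle u v w := by exact_mod_cast hG.dist_triangle
  eq_of_dist_eq_zero h := hG.dist_eq_zero_iff.1 (by exact_mod_cast h)

theorem closedBall_graphMetricSpace_natCast (hG : G.Connected) (u : V) (n : ℕ) :
    letI := graphMetricSpace hG
    closedBall u (n : ℝ) = {w | G.dist u w ≤ n} := by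
  ext w
  rw [mem_ofPred_eq, SimpleGraph.dist_comm]
  exact Nat.cast_le (α := ℝ)

theorem closedBall_graphMetricSpace (hG : G.Connected) (u : V) {r : ℝ} (hr : 0 ≤ r) :
    letI := graphMetricSpace hG
    closedBall u r = G.ball u (⌊r⌋₊ + 1) := by
  ext w
  rw [SimpleGraph.mem_ball, ← (hG w u).coe_dist_eq_edist]
  norm_cast
  rw [Nat.lt_add_one_iff, Nat.le_floor_iff hr]
  rfl

theorem finite_closedBall_graphMetricSpace (hG : G.Connected)
    (hfin : ∀ v, (G.neighborSet v).Finite) (u : V) (r : ℝ) :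
    letI := graphMetricSpace hG
    (closedBall u r).Finite := by
  let _ := graphMetricSpace hG
  rcases lt_or_ge r 0 with hr | hr
  · simp [closedBall_eq_empty.2 hr]
  · rw [closedBall_graphMetricSpace hG u hr]
    exact ball_add_one_finite hfin u _

theorem encard_closedBall_graphMetricSpace_le_pow (hG : G.Connected) {D : ℕ}
    (hD : ∀ v, (G.neighborSet v).encard ≤ D) (u : V) (r : ℝ) :
    letI := graphMetricSpace hG
    (closedBall u r).encard ≤ ((D + 1) ^ ⌊r⌋₊ : ℕ) := by
  let _ := graphMetricSpace hG
  rcases lt_or_ge r 0 with hr | hr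
  · simp [closedBall_eq_empty.2 hr]
  · rw [closedBall_graphMetricSpace hG u hr]
    exact encard_ball_add_one_le_pow hD u _

end Graph

/-- A `k`-quasiisometric embedding of a bounded-valence graph with exponential
growth parameters `(a,b)` into a locally finite graph forces exponential growth
of balls around any vertex `k`-close to the image, with parameters
`(a', b^(1/k))` where `a'` depends only on `a`, `b`, `k` and `D`. -/
theorem stmt2 (a b k : ℝ) (ha : 0 < a) (hb : 1 < b) (hk : 1 ≤ k)
    (D : ℕ) (hD : 2 ≤ D) :
    ∃ a' : ℝ, 0 < a' ∧
      ∀ (V₁ V₂ : Type*) (Γ₁ : SimpleGraph V₁) (Γ₂ : SimpleGraph V₂),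
        Γ₁.Connected → Γ₂.Connected →
        (∀ v : V₁, (Γ₁.neighborSet v).Finite ∧ (Γ₁.neighborSet v).ncard ≤ D) →
        (∀ v : V₂, (Γ₂.neighborSet v).Finite) →
        (∀ (u : V₁) (n : ℕ), 1 ≤ n →
            a * b ^ n ≤ ({w : V₁ | Γ₁.dist u w ≤ n}.ncard : ℝ)) →
        ∀ φ : V₁ → V₂,
          (∀ x y : V₁,
              (1 / k) * (Γ₁.dist x y : ℝ) - k ≤ (Γ₂.dist (φ x) (φ y) : ℝ) ∧
              (Γ₂.dist (φ x) (φ y) : ℝ) ≤ k * (Γ₁.dist x y : ℝ) + k) →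
          ∀ (v : V₂) (u : V₁), (Γ₂.dist (φ u) v : ℝ) ≤ k →
            ∀ m : ℕ, 1 ≤ m →
              a' * (b ^ ((1 : ℝ) / k)) ^ m ≤ ({w : V₂ | Γ₂.dist v w ≤ m}.ncard : ℝ) := by
  set N : ℕ := (D + 1) ^ ⌊k * k⌋₊
  have hk₀ : 0 < k := by linarith
  refine ⟨min 1 (a / N) * b ^ (-(1 + (k + k) / k)), by positivity, ?_⟩
  intro V₁ V₂ Γ₁ Γ₂ hΓ₁ hΓ₂ hvalence hlocfin hgrowth φ hφ v u huv m _
  let _ := graphMetricSpace hΓ₁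
  let _ := graphMetricSpace hΓ₂
  have hfibre : ∀ y, (φ ⁻¹' {y}).encard ≤ N :=
    encard_preimage_singleton_le_of_le_dist hk₀ (fun x y => (hφ x y).1) fun x =>
      encard_closedBall_graphMetricSpace_le_pow hΓ₁
        (fun w => encard_le_coe_iff_finite_ncard_le.2 (hvalence w)) x (k * k)
  have hpow : (b ^ ((1 : ℝ) / k)) ^ m = b ^ ((m : ℝ) / k) := by
    rw [← Real.rpow_mul_natCast (by positivity), one_div_mul_eq_div]
  simp only [← closedBall_graphMetricSpace_natCast hΓ₁] at hgrowth
  rw [hpow, ← closedBall_graphMetricSpace_natCast hΓ₂]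
  exact stmt2_general ha.le hb.le hk₀
    (dist_apply_le_of_coarse_lipschitz (fun x y => (hφ x y).2) huv) hfibre (hgrowth u)
    m.cast_nonneg (finite_closedBall_graphMetricSpace hΓ₂ hlocfin v m)
end

section
/- Let D' ≥ 0. Let X be a connected simple graph with graph metric d_X and π: V(X) → ℕ a surjection with |π(u) − π(v)| ≤ 1 for adjacent u, v, whose fibers F_j = π^{−1}(j) induce connected subgraphs of X with graph metrics d_j. For each j ∈ ℕ let φ_j: F_j → F_{j+1} be a map such that φ_j(y) is adjacent to y in X for every y ∈ F_j. Let (A_j)_{j∈ℕ} be nonempty subsets A_j ⊆ F_j such that for every j: every y ∈ A_j admits y' ∈ A_{j+1} with d_{j+1}(φ_j(y), y') ≤ D', and every y' ∈ A_{j+1} admits y ∈ A_j with d_{j+1}(φ_j(y), y') ≤ D'. Then for every i ∈ ℕ and every x ∈ A_i there exists a map σ: ℕ → V(X) with π(σ(j)) = j and σ(j) ∈ A_j for all j, σ(i) = x, and |m − n| ≤ d_X(σ(m), σ(n)) ≤ (D'+1)·|m − n| for all m, n ∈ ℕ; in particular σ is a 2(1+D')-qi section. -/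
/-!
Starting from `x ∈ A i`, choose points of `A (i + 1)`, `A (i + 2)`, … by the forward half of the
Hausdorff condition, and points of `A (i - 1)`, …, `A 0` by the backward half. Consecutive points
`y ∈ A j`, `y' ∈ A (j + 1)` are joined by the edge from `y` to `φ j y` followed by a fiber path of
length at most `D'` from `φ j y` to `y'`; summing these gives the upper bound. The lower bound holds
because `π` is 1-Lipschitz for the graph metric.
-/

section RelatedSequences

variable {α : ℕ → Type*} {R : ∀ j, α j → α (j + 1) → Prop}

theorem exists_related_seq_from_zero (forward : ∀ j y, ∃ y', R j y y') (x : α 0) :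
    ∃ σ : ∀ j, α j, σ 0 = x ∧ ∀ j, R j (σ j) (σ (j + 1)) := by
  choose next hnext using forward
  exact ⟨fun j => Nat.rec x next j, rfl, fun j => hnext j _⟩

theorem exists_related_seq_through (forward : ∀ j y, ∃ y', R j y y')
    (backward : ∀ j y', ∃ y, R j y y') (i : ℕ) (x : α i) :
    ∃ σ : ∀ j, α j, σ i = x ∧ ∀ j, R j (σ j) (σ (j + 1)) := by
  induction i generalizing α with
  | zero => exact exists_related_seq_from_zero forward x
  | succ i ih =>
    obtain ⟨tail, htail, hrel⟩ :=
      ih (R := fun j => R (j + 1)) (fun j => forward (j + 1)) (fun j => backward (j + 1)) x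
    obtain ⟨y, hy⟩ := backward 0 (tail 0)
    refine ⟨fun j => Nat.casesOn j y tail, htail, fun j => ?_⟩
    cases j with
    | zero => exact hy
    | succ j => exact hrel j

end RelatedSequences

theorem nat_dist_le_one_iff {m n : ℕ} : dist m n ≤ 1 ↔ m ≤ n + 1 ∧ n ≤ m + 1 := by
  rw [Nat.dist_eq, abs_sub_le_iff, sub_le_iff_le_add', sub_le_iff_le_add']
  norm_cast

section GraphDistance

variable {V W : Type*} {G : SimpleGraph V} {H : SimpleGraph W}

theorem dist_hom_apply_le (f : G →g H) {u v : V} (huv : G.Reachable u v) :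
    H.dist (f u) (f v) ≤ G.dist u v := by
  obtain ⟨p, hp⟩ := huv.exists_walk_length_eq_dist
  calc H.dist (f u) (f v) ≤ (p.map f).length := SimpleGraph.dist_le _
    _ = G.dist u v := by rw [SimpleGraph.Walk.length_map, hp]

theorem dist_le_dist_induce_add_one {s : Set V} {u : V} {w v : s} (huw : G.Adj u w)
    (hwv : (G.induce s).Reachable w v) : G.dist u v ≤ (G.induce s).dist w v + 1 :=
  calc G.dist u v ≤ G.dist u w + G.dist w v := huw.reachable.dist_triangle_left _
    _ = G.dist w v + 1 := by rw [SimpleGraph.dist_eq_one_iff_adj.mpr huw, add_comm]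
    _ ≤ (G.induce s).dist w v + 1 :=
      Nat.add_le_add_right (dist_hom_apply_le (SimpleGraph.Embedding.induce s).toHom hwv) 1

theorem dist_le_add_one_of_dist_induce_le {s : Set V} {u : V} {w v : s} {D : ℝ}
    (huw : G.Adj u w) (hwv : (G.induce s).Reachable w v) (hD : ((G.induce s).dist w v : ℝ) ≤ D) :
    (G.dist u v : ℝ) ≤ D + 1 :=
  calc (G.dist u v : ℝ) ≤ (G.induce s).dist w v + 1 :=
        mod_cast dist_le_dist_induce_add_one huw hwv
    _ ≤ D + 1 := by gcongr

theorem dist_apply_le_mul_walk_length {E : Type*} [PseudoMetricSpace E] {f : V → E} {K : ℝ}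
    (hf : ∀ u v, G.Adj u v → dist (f u) (f v) ≤ K) {u v : V} (p : G.Walk u v) :
    dist (f u) (f v) ≤ K * p.length := by
  induction p with
  | nil => simp
  | @cons u w v huw p ih =>
    calc dist (f u) (f v) ≤ dist (f u) (f w) + dist (f w) (f v) := dist_triangle _ _ _
      _ ≤ K + K * p.length := add_le_add (hf u w huw) ih
      _ = K * (SimpleGraph.Walk.cons huw p).length := by
        rw [SimpleGraph.Walk.length_cons]; push_cast; ring

theorem dist_apply_le_mul_graph_dist {E : Type*} [PseudoMetricSpace E] {f : V → E} {K : ℝ}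
    (hf : ∀ u v, G.Adj u v → dist (f u) (f v) ≤ K) {u v : V} (huv : G.Reachable u v) :
    dist (f u) (f v) ≤ K * G.dist u v := by
  obtain ⟨p, hp⟩ := huv.exists_walk_length_eq_dist
  exact hp ▸ dist_apply_le_mul_walk_length hf p

variable {σ : ℕ → V} {K : ℝ}

theorem graph_dist_add_le_mul (hG : G.Preconnected)
    (hσ : ∀ j, (G.dist (σ j) (σ (j + 1)) : ℝ) ≤ K) (m k : ℕ) :
    (G.dist (σ m) (σ (m + k)) : ℝ) ≤ K * k := by
  induction k with
  | zero => simp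
  | succ k ih =>
    calc (G.dist (σ m) (σ (m + (k + 1))) : ℝ)
        ≤ G.dist (σ m) (σ (m + k)) + G.dist (σ (m + k)) (σ (m + k + 1)) :=
          mod_cast (hG _ _).dist_triangle_left _
      _ ≤ K * k + K := add_le_add ih (hσ (m + k))
      _ = K * (k + 1 : ℕ) := by push_cast; ring

theorem graph_dist_le_mul_abs_sub (hG : G.Preconnected)
    (hσ : ∀ j, (G.dist (σ j) (σ (j + 1)) : ℝ) ≤ K) (m n : ℕ) :
    (G.dist (σ m) (σ n) : ℝ) ≤ K * |(m : ℝ) - n| := by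
  wlog hmn : m ≤ n generalizing m n
  · rw [SimpleGraph.dist_comm, abs_sub_comm]
    exact this n m (le_of_not_ge hmn)
  obtain ⟨k, rfl⟩ := Nat.exists_eq_add_of_le hmn
  simpa using graph_dist_add_le_mul hG hσ m k

end GraphDistance

/-- Given fiberwise sets `A_j` in a metric graph bundle over the ray whose
consecutive levels are at fiberwise Hausdorff distance at most `D'` under the
natural maps `φ_j`, through every point of `A_i` there is a section `σ` with
`σ(j) ∈ A_j` for all `j` satisfying `|m−n| ≤ d_X(σ m, σ n) ≤ (D'+1)|m−n|`. -/
theorem stmt10 {V : Type*} (D' : ℝ) (hD' : 0 ≤ D')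
    (X : SimpleGraph V) (π : V → ℕ)
    (hconn : X.Connected) (hsurj : Function.Surjective π)
    (hlip : ∀ u v : V, X.Adj u v → π u ≤ π v + 1 ∧ π v ≤ π u + 1)
    (hfconn : ∀ j : ℕ, (X.induce {v | π v = j}).Connected)
    (φ : ∀ j : ℕ, {v | π v = j} → {v | π v = j + 1})
    (hφ : ∀ (j : ℕ) (y : {v | π v = j}), X.Adj ((φ j y : V)) (y : V))
    (A : ℕ → Set V) (hA : ∀ j : ℕ, A j ⊆ {v | π v = j})
    (hAne : ∀ j : ℕ, (A j).Nonempty)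
    (hfwd : ∀ (j : ℕ) (y : {v | π v = j}), (y : V) ∈ A j →
        ∃ y' : {v | π v = j + 1}, (y' : V) ∈ A (j + 1) ∧
          (((X.induce {v | π v = j + 1}).dist (φ j y) y' : ℕ) : ℝ) ≤ D')
    (hbwd : ∀ (j : ℕ) (y' : {v | π v = j + 1}), (y' : V) ∈ A (j + 1) →
        ∃ y : {v | π v = j}, (y : V) ∈ A j ∧
          (((X.induce {v | π v = j + 1}).dist (φ j y) y' : ℕ) : ℝ) ≤ D') :
    ∀ (i : ℕ) (x : V), x ∈ A i →
      ∃ σ : ℕ → V, (∀ j : ℕ, π (σ j) = j) ∧ (∀ j : ℕ, σ j ∈ A j) ∧ σ i = x ∧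
        ∀ m n : ℕ,
          |(m : ℝ) - (n : ℝ)| ≤ (X.dist (σ m) (σ n) : ℝ) ∧
          (X.dist (σ m) (σ n) : ℝ) ≤ (D' + 1) * |(m : ℝ) - (n : ℝ)| := by
  intro i x hx
  have dist_step (j : ℕ) (y : {v | π v = j}) (y' : {v | π v = j + 1})
      (h : ((X.induce {v | π v = j + 1}).dist (φ j y) y' : ℝ) ≤ D') :
      (X.dist (y : V) y' : ℝ) ≤ D' + 1 :=
    dist_le_add_one_of_dist_induce_le (hφ j y).symm (hfconn (j + 1) _ _) h
  obtain ⟨σ, hσi, hσ⟩ := exists_related_seq_through (α := fun j => A j)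
    (R := fun _ y y' => (X.dist (y : V) y' : ℝ) ≤ D' + 1)
    (fun j y => by
      obtain ⟨y', hy', h⟩ := hfwd j ⟨y, hA j y.2⟩ y.2
      exact ⟨⟨y', hy'⟩, dist_step j _ y' h⟩)
    (fun j y' => by
      obtain ⟨y, hy, h⟩ := hbwd j ⟨y', hA (j + 1) y'.2⟩ y'.2
      exact ⟨⟨y, hy⟩, dist_step j y _ h⟩) i ⟨x, hx⟩
  have hπσ (j : ℕ) : π (σ j) = j := hA j (σ j).2
  have hπ_lip (u v : V) (huv : X.Adj u v) : dist (π u) (π v) ≤ 1 :=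
    nat_dist_le_one_iff.mpr (hlip u v huv)
  refine ⟨fun j => σ j, hπσ, fun j => (σ j).2, congrArg Subtype.val hσi, fun m n =>
    ⟨?_, graph_dist_le_mul_abs_sub hconn.preconnected hσ m n⟩⟩
  simpa [hπσ, Nat.dist_eq] using dist_apply_le_mul_graph_dist hπ_lip (hconn (σ m) (σ n))
end

section
/- Let δ ≥ 0 and K ≥ 1, and set D = Kδ + K²/2. Let X be a geodesic metric space whose geodesic triangles are δ-thin, and let x, y, z, w ∈ X. Suppose α is a geodesic from z to y and β is a geodesic from y to w such that the arclength parametrization of the concatenation α·β — the map γ: [0, d(z,y)+d(y,w)] → X with γ(s) = α(s) for 0 ≤ s ≤ d(z,y) and γ(s) = β(s − d(z,y)) for d(z,y) ≤ s — is a K-quasigeodesic. Then min{(x,z)_y, (x,w)_y} ≤ D, and moreover (z,w)_y ≤ D. -/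
/-- Gromov product `(x,y)_p = ½(d(p,x)+d(p,y)−d(x,y))`. -/
noncomputable def gromovProd {X : Type*} [MetricSpace X] (p x y : X) : ℝ :=
  (dist p x + dist p y - dist x y) / 2

/-- `γ` is a geodesic from `x` to `y`, parametrized on `[0, dist x y]`. -/
def IsGeodesicFrom {X : Type*} [MetricSpace X] (γ : ℝ → X) (x y : X) : Prop :=
  γ 0 = x ∧ γ (dist x y) = y ∧
    ∀ s ∈ Set.Icc (0 : ℝ) (dist x y), ∀ t ∈ Set.Icc (0 : ℝ) (dist x y),
      dist (γ s) (γ t) = |s - t|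

/-- Every pair of points is joined by a geodesic. -/
def IsGeodesicSpace (X : Type*) [MetricSpace X] : Prop :=
  ∀ x y : X, ∃ γ : ℝ → X, IsGeodesicFrom γ x y

/-- Geodesic triangles are δ-thin. -/
def ThinTriangles (X : Type*) [MetricSpace X] (δ : ℝ) : Prop :=
  ∀ x y z : X, ∀ α β : ℝ → X, IsGeodesicFrom α y x → IsGeodesicFrom β y z →
    ∀ t : ℝ, 0 ≤ t → t ≤ gromovProd y x z → dist (α t) (β t) ≤ δ

/-!
If the concatenation of `[z, y]` and `[y, w]` expands distances up to constants, then the points at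
distance `t` from `y` on either side of the corner, which are `2t` apart in arclength, cannot be
close unless `t` is small. Thinness makes them `δ`-close for `t = (z,w)_y`, and `2δ`-close for
`t = min{(x,z)_y, (x,w)_y}` by comparing both with a geodesic from `y` to `x`.
-/

section ThinTriangles

variable {X : Type*} [MetricSpace X]

theorem gromovProd_comm (p x y : X) : gromovProd p x y = gromovProd p y x := by
  unfold gromovProd
  rw [dist_comm x y, add_comm (dist p x)]

theorem gromovProd_nonneg (p x y : X) : 0 ≤ gromovProd p x y := by
  unfold gromovProd
  linarith [dist_triangle_left x y p]

theorem gromovProd_le_dist_left (p x y : X) : gromovProd p x y ≤ dist p x := by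
  unfold gromovProd
  linarith [dist_triangle p x y]

theorem gromovProd_le_dist_right (p x y : X) : gromovProd p x y ≤ dist p y :=
  gromovProd_comm p x y ▸ gromovProd_le_dist_left p y x

theorem IsGeodesicFrom.reverse {α : ℝ → X} {x y : X} (hα : IsGeodesicFrom α x y) :
    IsGeodesicFrom (fun t => α (dist x y - t)) y x := by
  obtain ⟨hα_zero, hα_dist, hα_isom⟩ := hα
  unfold IsGeodesicFrom
  rw [dist_comm y x]
  refine ⟨by simpa using hα_dist, by simpa using hα_zero, fun s hs t ht => ?_⟩
  have sub_mem {u : ℝ} (hu : u ∈ Set.Icc 0 (dist x y)) :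
      dist x y - u ∈ Set.Icc 0 (dist x y) :=
    ⟨sub_nonneg.2 hu.2, sub_le_self _ hu.1⟩
  rw [hα_isom _ (sub_mem hs) _ (sub_mem ht), sub_sub_sub_cancel_left, abs_sub_comm]

theorem ThinTriangles.dist_le_two_mul {δ : ℝ} (hthin : ThinTriangles X δ) {x y z w : X}
    {σ α β : ℝ → X} (hσ : IsGeodesicFrom σ y x) (hα : IsGeodesicFrom α y z)
    (hβ : IsGeodesicFrom β y w) {t : ℝ} (ht : 0 ≤ t)
    (htmin : t ≤ min (gromovProd y x z) (gromovProd y x w)) :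
    dist (α t) (β t) ≤ 2 * δ :=
  calc
    dist (α t) (β t) ≤ dist (σ t) (α t) + dist (σ t) (β t) := dist_triangle_left _ _ _
    _ ≤ δ + δ := add_le_add
      (hthin x y z σ α hσ hα t ht (htmin.trans (min_le_left _ _)))
      (hthin x y w σ β hσ hβ t ht (htmin.trans (min_le_right _ _)))
    _ = 2 * δ := (two_mul δ).symm

end ThinTriangles

section PathConcat

variable {X : Type*}

/-- The concatenation of the path `α`, followed on `(-∞, a]`, with the path `β`, started at time
`a`. The paths are total functions, and no agreement `α a = β 0` at the junction is required. -/
noncomputable def pathConcat (a : ℝ) (α β : ℝ → X) (s : ℝ) : X :=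
  if s ≤ a then α s else β (s - a)

theorem pathConcat_of_le {a s : ℝ} (α β : ℝ → X) (hs : s ≤ a) : pathConcat a α β s = α s :=
  if_pos hs

theorem pathConcat_add {a t : ℝ} {α β : ℝ → X} (hjoin : α a = β 0) (ht : 0 ≤ t) :
    pathConcat a α β (a + t) = β t := by
  rcases ht.eq_or_lt with rfl | ht
  · rw [add_zero, pathConcat_of_le α β le_rfl, hjoin]
  · rw [pathConcat, if_neg (by linarith), add_sub_cancel_left]

variable [PseudoMetricSpace X]

/-- The lower half of the quasigeodesic inequality on `S`, with separate multiplicative constant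
`K` and additive constant `C`; a `K`-quasigeodesic satisfies it with `C = K`. -/
def IsQuasiExpandingOn (K C : ℝ) (γ : ℝ → X) (S : Set ℝ) : Prop :=
  ∀ s ∈ S, ∀ t ∈ S, 1 / K * |s - t| - C ≤ dist (γ s) (γ t)

theorem IsQuasiExpandingOn.abs_sub_le {K C : ℝ} {γ : ℝ → X} {S : Set ℝ}
    (hγ : IsQuasiExpandingOn K C γ S) (hK : 0 < K) {s t : ℝ} (hs : s ∈ S) (ht : t ∈ S) :
    |s - t| ≤ K * (dist (γ s) (γ t) + C) := by
  rw [← inv_mul_le_iff₀ hK, ← one_div]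
  exact sub_le_iff_le_add.1 (hγ s hs t ht)

theorem IsQuasiExpandingOn.two_mul_le_of_pathConcat {K C a b t : ℝ} {α β : ℝ → X}
    (hγ : IsQuasiExpandingOn K C (pathConcat a α β) (Set.Icc 0 (a + b))) (hK : 0 < K)
    (hjoin : α a = β 0) (ht : 0 ≤ t) (hta : t ≤ a) (htb : t ≤ b) :
    2 * t ≤ K * (dist (α (a - t)) (β t) + C) :=
  calc
    2 * t = |(a - t) - (a + t)| := by
      rw [show (a - t) - (a + t) = -(2 * t) by ring, abs_neg, abs_of_nonneg (by positivity)]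
    _ ≤ K * (dist (pathConcat a α β (a - t)) (pathConcat a α β (a + t)) + C) :=
      hγ.abs_sub_le hK ⟨by linarith, by linarith⟩ ⟨by linarith, by linarith⟩
    _ = K * (dist (α (a - t)) (β t) + C) := by
      rw [pathConcat_of_le α β (sub_le_self a ht), pathConcat_add hjoin ht]

end PathConcat

section Corner

variable {X : Type*} [MetricSpace X] {δ K C : ℝ} {x y z w : X} {σ α β : ℝ → X}

theorem IsQuasiExpandingOn.two_mul_le_of_geodesics
    (hγ : IsQuasiExpandingOn K C (pathConcat (dist z y) α β) (Set.Icc 0 (dist z y + dist y w)))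
    (hK : 0 < K) (hα : IsGeodesicFrom α z y) (hβ : IsGeodesicFrom β y w) {t r : ℝ} (ht : 0 ≤ t)
    (htz : t ≤ dist y z) (htw : t ≤ dist y w) (hr : dist (α (dist z y - t)) (β t) ≤ r) :
    2 * t ≤ K * (r + C) :=
  (hγ.two_mul_le_of_pathConcat hK (hα.2.1.trans hβ.1.symm) ht (dist_comm y z ▸ htz) htw).trans
    (by gcongr)

theorem IsQuasiExpandingOn.gromovProd_le
    (hγ : IsQuasiExpandingOn K C (pathConcat (dist z y) α β) (Set.Icc 0 (dist z y + dist y w)))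
    (hK : 0 < K) (hthin : ThinTriangles X δ) (hα : IsGeodesicFrom α z y)
    (hβ : IsGeodesicFrom β y w) :
    gromovProd y z w ≤ K * (δ + C) / 2 := by
  have hnonneg := gromovProd_nonneg y z w
  have hclose := hthin z y w _ β hα.reverse hβ _ hnonneg le_rfl
  linarith [hγ.two_mul_le_of_geodesics hK hα hβ hnonneg (gromovProd_le_dist_left y z w)
    (gromovProd_le_dist_right y z w) hclose]

theorem IsQuasiExpandingOn.min_gromovProd_le
    (hγ : IsQuasiExpandingOn K C (pathConcat (dist z y) α β) (Set.Icc 0 (dist z y + dist y w)))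
    (hK : 0 < K) (hthin : ThinTriangles X δ) (hσ : IsGeodesicFrom σ y x)
    (hα : IsGeodesicFrom α z y) (hβ : IsGeodesicFrom β y w) :
    min (gromovProd y x z) (gromovProd y x w) ≤ K * (2 * δ + C) / 2 := by
  have hnonneg := le_min (gromovProd_nonneg y x z) (gromovProd_nonneg y x w)
  have hclose := hthin.dist_le_two_mul hσ hα.reverse hβ hnonneg le_rfl
  linarith [hγ.two_mul_le_of_geodesics hK hα hβ hnonneg
    ((min_le_left _ _).trans (gromovProd_le_dist_right y x z))
    ((min_le_right _ _).trans (gromovProd_le_dist_right y x w)) hclose]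

end Corner

/-- If the concatenation of geodesics `[z,y]` and `[y,w]` is a
`K`-quasigeodesic, then `min{(x,z)_y, (x,w)_y} ≤ Kδ + K²/2` for every `x`,
and moreover `(z,w)_y ≤ Kδ + K²/2`. -/
theorem stmt13 {X : Type*} [MetricSpace X] (δ K : ℝ) (hδ : 0 ≤ δ) (hK : 1 ≤ K)
    (hgeo : IsGeodesicSpace X) (hthin : ThinTriangles X δ)
    (x y z w : X) (α β : ℝ → X)
    (hα : IsGeodesicFrom α z y) (hβ : IsGeodesicFrom β y w)
    (γ : ℝ → X)
    (hγdef : ∀ s : ℝ, γ s = if s ≤ dist z y then α s else β (s - dist z y))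
    (hγqg : ∀ s ∈ Set.Icc (0 : ℝ) (dist z y + dist y w),
        ∀ t ∈ Set.Icc (0 : ℝ) (dist z y + dist y w),
          (1 / K) * |s - t| - K ≤ dist (γ s) (γ t) ∧
          dist (γ s) (γ t) ≤ K * |s - t| + K) :
    min (gromovProd y x z) (gromovProd y x w) ≤ K * δ + K ^ 2 / 2 ∧
      gromovProd y z w ≤ K * δ + K ^ 2 / 2 := by
  have hK_pos : 0 < K := zero_lt_one.trans_le hK
  obtain rfl : γ = pathConcat (dist z y) α β := funext hγdef
  have hγ : IsQuasiExpandingOn K K (pathConcat (dist z y) α β)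
      (Set.Icc 0 (dist z y + dist y w)) :=
    fun s hs t ht => (hγqg s hs t ht).1
  obtain ⟨σ, hσ⟩ := hgeo y x
  constructor
  · calc
      min (gromovProd y x z) (gromovProd y x w) ≤ K * (2 * δ + K) / 2 :=
        hγ.min_gromovProd_le hK_pos hthin hσ hα hβ
      _ = K * δ + K ^ 2 / 2 := by ring
  · calc
      gromovProd y z w ≤ K * (δ + K) / 2 := hγ.gromovProd_le hK_pos hthin hα hβ
      _ ≤ K * δ + K ^ 2 / 2 := by linarith [mul_nonneg hK_pos.le hδ]
end

section
/- Let k ≥ 1 and let φ: X → Y be a k-quasiisometric embedding between geodesic metric spaces. Let x, x₁, x₂ ∈ X, let n ≥ 1 be an integer, and let γ be a continuous path of finite length in X from x₁ to x₂ such that d(x, p) ≥ n for every point p on γ. Then there exists a continuous path γ' in Y from φ(x₁) to φ(x₂) such that: (a) d(φ(x), q) > (n−1)/k − 3k for every point q on γ'; (b) the Hausdorff distance between φ(γ) and γ' is at most 4k; and (c) length(γ') ≤ 2k·length(γ) + 2k. -/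
/-!
Cut `γ` greedily: from each breakpoint go on until the distance to it first equals `1`. Uniform
continuity of `γ` makes this stop after finitely many steps. Every completed piece has length at
least `1`, while the images under `φ` of its endpoints are at most `2k` apart, so joining the images
of consecutive breakpoints by geodesics costs at most `2k` per unit of length of `γ`, plus `2k` for
the last, incomplete piece. Both `φ ∘ γ` and the new path stay within `2k` of the images of the
breakpoints, which lie on both of them.
-/

open Set Metric

section FirstExit

theorem exists_first_hitting_of_continuousOn {α β : Type*}
    [ConditionallyCompleteLinearOrder α] [TopologicalSpace α] [OrderTopology α] [DenselyOrdered α]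
    [LinearOrder β] [TopologicalSpace β] [OrderClosedTopology β] {u : α → β} {a b : α} {r : β}
    (hu : ContinuousOn u (Icc a b)) (hab : a ≤ b) (ha : u a ≤ r) (hb : r ≤ u b) :
    ∃ c ∈ Icc a b, u c = r ∧ ∀ t ∈ Icc a c, u t ≤ r := by
  have hits_before : ∀ t ∈ Icc a b, r ≤ u t → ∃ s ∈ Icc a t, u s = r := fun t ht hrt ↦
    intermediate_value_Icc ht.1 (hu.mono (Icc_subset_Icc_right ht.2)) ⟨ha, hrt⟩
  have isCompact_hits : IsCompact (Icc a b ∩ u ⁻¹' {r}) :=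
    isCompact_Icc.of_isClosed_subset
      (hu.preimage_isClosed_of_isClosed isClosed_Icc isClosed_singleton) inter_subset_left
  obtain ⟨c, ⟨hc, huc⟩, hleast⟩ :=
    isCompact_hits.exists_isLeast (hits_before b (right_mem_Icc.2 hab) hb)
  refine ⟨c, hc, huc, fun t ht ↦ ?_⟩
  by_contra! hrt
  obtain ⟨s, hs, hus⟩ := hits_before t ⟨ht.1, ht.2.trans hc.2⟩ hrt.le
  have hcs : c ≤ s := hleast ⟨⟨hs.1, hs.2.trans (ht.2.trans hc.2)⟩, hus⟩
  have htc : t = c := ht.2.antisymm (hcs.trans hs.2)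
  exact hrt.ne' (htc ▸ huc)

variable {X : Type*} [PseudoMetricSpace X] {γ : ℝ → X} {a b r : ℝ}

theorem forall_dist_le_or_exists_first_exit (hγ : ContinuousOn γ (Icc a b)) (hr : 0 ≤ r) :
    (∀ t ∈ Icc a b, dist (γ t) (γ a) ≤ r) ∨
      ∃ c ∈ Icc a b, dist (γ c) (γ a) = r ∧ ∀ t ∈ Icc a c, dist (γ t) (γ a) ≤ r := by
  refine or_iff_not_imp_left.2 fun hfar ↦ ?_
  push Not at hfar
  obtain ⟨t, ht, hrt⟩ := hfar
  have hsub : Icc a t ⊆ Icc a b := Icc_subset_Icc_right ht.2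
  have hγt : ContinuousOn γ (Icc a t) := hγ.mono hsub
  have hdist : ContinuousOn (fun s ↦ dist (γ s) (γ a)) (Icc a t) := by fun_prop
  obtain ⟨c, hc, hexit⟩ := exists_first_hitting_of_continuousOn hdist ht.1 (by simpa) hrt.le
  exact ⟨c, hsub hc, hexit⟩

theorem first_exit_induction {P : ℝ → Prop} (hγ : ContinuousOn γ (Icc a b)) (hab : a ≤ b)
    (hr : 0 < r)
    (last : ∀ c ∈ Icc a b, (∀ t ∈ Icc c b, dist (γ t) (γ c) ≤ r) → P c)
    (step : ∀ c ∈ Icc a b, ∀ d ∈ Icc c b, dist (γ d) (γ c) = r →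
      (∀ t ∈ Icc c d, dist (γ t) (γ c) ≤ r) → P d → P c) :
    P a := by
  obtain ⟨δ, hδ, hγδ⟩ := Metric.uniformContinuousOn_iff.1
    (isCompact_Icc.uniformContinuousOn_of_continuous hγ) r hr
  have induct : ∀ m : ℕ, ∀ c ∈ Icc a b, b - c < m * δ → P c := by
    intro m
    induction m with
    | zero =>
      intro c hc hcb
      rw [Nat.cast_zero, zero_mul, sub_neg] at hcb
      exact absurd hc.2 hcb.not_ge
    | succ m ih =>
      intro c hc hcb
      obtain hnear | ⟨d, hd, hexit, hnear⟩ :=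
        forall_dist_le_or_exists_first_exit (hγ.mono (Icc_subset_Icc_left hc.1)) hr.le
      · exact last c hc hnear
      have hd' : d ∈ Icc a b := ⟨hc.1.trans hd.1, hd.2⟩
      have hδd : δ ≤ d - c := by
        by_contra! hlt
        refine (hγδ d hd' c hc ?_).ne hexit
        rwa [Real.dist_eq, abs_of_nonneg (sub_nonneg.2 hd.1)]
      refine step c hc d hd hexit hnear (ih d hd' ?_)
      push_cast at hcb
      linarith
  obtain ⟨m, hm⟩ := exists_nat_gt ((b - a) / δ)
  exact induct m a (left_mem_Icc.2 hab) ((div_lt_iff₀ hδ).1 hm)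

end FirstExit

section Geodesic

variable {Y : Type*} [MetricSpace Y]

theorem IsGeodesicFrom.lipschitzOnWith {g : ℝ → Y} {p q : Y} (hg : IsGeodesicFrom g p q) :
    LipschitzOnWith 1 g (Icc 0 (dist p q)) :=
  .of_dist_le_mul fun s hs t ht ↦ by rw [hg.2.2 s hs t ht, Real.dist_eq, NNReal.coe_one, one_mul]

theorem IsGeodesicFrom.eVariationOn_le {g : ℝ → Y} {p q : Y} (hg : IsGeodesicFrom g p q) :
    eVariationOn g (Icc 0 (dist p q)) ≤ edist p q := by
  simpa [eVariationOn_id_Icc, edist_dist] using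
    hg.lipschitzOnWith.comp_eVariationOn_le (mapsTo_id _)

theorem IsGeodesicSpace.exists_path_eVariationOn_le (hY : IsGeodesicSpace Y) {a b : ℝ}
    (hab : a ≤ b) {p q : Y} (hpq : a = b → p = q) :
    ∃ σ : ℝ → Y, ContinuousOn σ (Icc a b) ∧ σ a = p ∧ σ b = q ∧
      eVariationOn σ (Icc a b) ≤ edist p q := by
  obtain ⟨g, hg⟩ := hY p q
  let u : ℝ → ℝ := fun t ↦ (t - a) / (b - a) * dist p q
  have hba : 0 ≤ b - a := sub_nonneg.2 hab
  have hu_mono : Monotone u := fun s t hst ↦ by dsimp only [u]; gcongr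
  have hu_maps : MapsTo u (Icc a b) (Icc 0 (dist p q)) := fun t ht ↦
    ⟨mul_nonneg (div_nonneg (sub_nonneg.2 ht.1) hba) dist_nonneg,
      mul_le_of_le_one_left dist_nonneg
        (div_le_one_of_le₀ (sub_le_sub_right ht.2 a) hba)⟩
  refine ⟨g ∘ u, hg.lipschitzOnWith.continuousOn.comp (by fun_prop) hu_maps, ?_, ?_, ?_⟩
  · simp [u, hg.1]
  · obtain heq | hlt := hab.eq_or_lt
    · simp [u, heq, hg.1, hpq heq]
    · simp [u, div_self (sub_pos.2 hlt).ne', hg.2.1]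
  · exact (eVariationOn.comp_le_of_monotoneOn g u (hu_mono.monotoneOn _) hu_maps).trans
      hg.eVariationOn_le

end Geodesic

section Concatenation

variable {α : Type*} [LinearOrder α] {a b c : α}

theorem eVariationOn_Icc_add_Icc {E : Type*} [PseudoEMetricSpace E] (f : α → E)
    (hab : a ≤ b) (hbc : b ≤ c) :
    eVariationOn f (Icc a b) + eVariationOn f (Icc b c) = eVariationOn f (Icc a c) := by
  simpa only [univ_inter] using eVariationOn.Icc_add_Icc f hab hbc (mem_univ b)

variable {Y : Type*} {σ τ : α → Y}

theorem piecewise_Iic_eqOn_Icc_left :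
    EqOn ((Iic b).piecewise σ τ) σ (Icc a b) :=
  (piecewise_eqOn _ σ τ).mono Icc_subset_Iic_self

theorem piecewise_Iic_eqOn_Icc_right (hb : σ b = τ b) :
    EqOn ((Iic b).piecewise σ τ) τ (Icc b c) := by
  intro t ht
  obtain rfl | hlt := ht.1.eq_or_lt
  · rw [piecewise_eq_of_mem _ _ _ self_mem_Iic, hb]
  · exact piecewise_eq_of_notMem _ _ _ (notMem_Iic.2 hlt)

theorem eVariationOn_piecewise_Iic [PseudoEMetricSpace Y] (hab : a ≤ b) (hbc : b ≤ c)
    (hb : σ b = τ b) :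
    eVariationOn ((Iic b).piecewise σ τ) (Icc a c) =
      eVariationOn σ (Icc a b) + eVariationOn τ (Icc b c) := by
  rw [← eVariationOn_Icc_add_Icc _ hab hbc, eVariationOn.congr piecewise_Iic_eqOn_Icc_left,
    eVariationOn.congr (piecewise_Iic_eqOn_Icc_right hb)]

end Concatenation

/-- The path `τ` is continuous on `[a, b]`, has the same endpoints as the possibly discontinuous
`f`, and tracks `f` with error `C`: at each time `t`, both `τ t` and `f t` are within `C` of a
common point of `τ` and `f`. The common point is attained by both at the same time `s`, but `s` need
not be `t`. -/
structure TracksOn {Y : Type*} [PseudoMetricSpace Y] (τ f : ℝ → Y) (C a b : ℝ) : Prop where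
  continuousOn : ContinuousOn τ (Icc a b)
  left_eq : τ a = f a
  right_eq : τ b = f b
  exists_common_point : ∀ t ∈ Icc a b, ∃ s ∈ Icc a b,
    τ s = f s ∧ dist (τ t) (f s) ≤ C ∧ dist (f t) (f s) ≤ C

namespace TracksOn

variable {Y : Type*} [PseudoMetricSpace Y] {σ τ f : ℝ → Y} {C a b c : ℝ}

theorem piecewise_Iic (hσ : TracksOn σ f C a b) (hτ : TracksOn τ f C b c) (hab : a ≤ b)
    (hbc : b ≤ c) : TracksOn ((Iic b).piecewise σ τ) f C a c := by
  have eq_left : EqOn ((Iic b).piecewise σ τ) σ (Icc a b) := piecewise_Iic_eqOn_Icc_left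
  have eq_right : EqOn ((Iic b).piecewise σ τ) τ (Icc b c) :=
    piecewise_Iic_eqOn_Icc_right (hσ.right_eq.trans hτ.left_eq.symm)
  refine ⟨?_, ?_, ?_, fun t ht ↦ ?_⟩
  · rw [← Icc_union_Icc_eq_Icc hab hbc]
    exact (hσ.continuousOn.congr eq_left).union_of_isClosed (hτ.continuousOn.congr eq_right)
      isClosed_Icc isClosed_Icc
  · exact (eq_left (left_mem_Icc.2 hab)).trans hσ.left_eq
  · exact (eq_right (right_mem_Icc.2 hbc)).trans hτ.right_eq
  · obtain htb | hbt := le_total t b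
    · obtain ⟨s, hs, hcommon, hdist⟩ := hσ.exists_common_point t ⟨ht.1, htb⟩
      refine ⟨s, ⟨hs.1, hs.2.trans hbc⟩, (eq_left hs).trans hcommon, ?_⟩
      rwa [eq_left ⟨ht.1, htb⟩]
    · obtain ⟨s, hs, hcommon, hdist⟩ := hτ.exists_common_point t ⟨hbt, ht.2⟩
      refine ⟨s, ⟨hab.trans hs.1, hs.2⟩, (eq_right hs).trans hcommon, ?_⟩
      rwa [eq_right ⟨hbt, ht.2⟩]

theorem hausdorffEDist_image_le (hτ : TracksOn τ f C a b) :
    hausdorffEDist (f '' Icc a b) (τ '' Icc a b) ≤ ENNReal.ofReal C := by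
  refine hausdorffEDist_le_of_mem_edist ?_ ?_ <;> rintro _ ⟨t, ht, rfl⟩ <;>
    obtain ⟨s, hs, hcommon, hτt, hft⟩ := hτ.exists_common_point t ht
  · refine ⟨τ s, mem_image_of_mem τ hs, ?_⟩
    rw [hcommon, edist_dist]
    exact ENNReal.ofReal_le_ofReal hft
  · refine ⟨f s, mem_image_of_mem f hs, ?_⟩
    rw [edist_dist]
    exact ENNReal.ofReal_le_ofReal hτt

theorem sub_le_dist (hτ : TracksOn τ f C a b) {y : Y} {R : ℝ}
    (hf : ∀ t ∈ Icc a b, R ≤ dist y (f t)) {t : ℝ} (ht : t ∈ Icc a b) :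
    R - C ≤ dist y (τ t) := by
  obtain ⟨s, hs, -, hτt, -⟩ := hτ.exists_common_point t ht
  linarith [hf s hs, dist_triangle y (τ t) (f s)]

end TracksOn

namespace IsGeodesicSpace

variable {Y : Type*} [MetricSpace Y] {a b C : ℝ}

theorem exists_tracksOn_of_dist_le (hY : IsGeodesicSpace Y) {f : ℝ → Y} (hab : a ≤ b)
    (hf : ∀ t ∈ Icc a b, dist (f t) (f a) ≤ C) :
    ∃ τ : ℝ → Y, TracksOn τ f C a b ∧ eVariationOn τ (Icc a b) ≤ ENNReal.ofReal C := by
  have ha : a ∈ Icc a b := left_mem_Icc.2 hab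
  have hC : 0 ≤ C := dist_nonneg.trans (hf a ha)
  obtain ⟨τ, hcont, hτa, hτb, hlength⟩ :=
    hY.exists_path_eVariationOn_le hab (congrArg f : a = b → f a = f b)
  have hlengthC : eVariationOn τ (Icc a b) ≤ ENNReal.ofReal C := by
    refine hlength.trans ?_
    rw [edist_comm, edist_dist]
    exact ENNReal.ofReal_le_ofReal (hf b (right_mem_Icc.2 hab))
  refine ⟨τ, ⟨hcont, hτa, hτb, fun t ht ↦ ⟨a, ha, hτa, ?_, hf t ht⟩⟩, hlengthC⟩
  rw [← hτa, ← ENNReal.ofReal_le_ofReal_iff hC, ← edist_dist]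
  exact (eVariationOn.edist_le τ ht ha).trans hlengthC

variable {X : Type*} [PseudoMetricSpace X] {φ : X → Y} {γ : ℝ → X} {r : ℝ}

theorem exists_tracksOn_comp (hY : IsGeodesicSpace Y) (hr : 0 < r)
    (hφ : ∀ p q, dist p q ≤ r → dist (φ p) (φ q) ≤ C) (hγ : ContinuousOn γ (Icc a b))
    (hab : a ≤ b) :
    ∃ τ : ℝ → Y, TracksOn τ (φ ∘ γ) C a b ∧
      eVariationOn τ (Icc a b) ≤
        ENNReal.ofReal (C / r) * eVariationOn γ (Icc a b) + ENNReal.ofReal C := by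
  refine first_exit_induction (P := fun c ↦ ∃ τ : ℝ → Y, TracksOn τ (φ ∘ γ) C c b ∧
    eVariationOn τ (Icc c b) ≤
      ENNReal.ofReal (C / r) * eVariationOn γ (Icc c b) + ENNReal.ofReal C) hγ hab hr ?_ ?_
  · intro c hc hnear
    obtain ⟨τ, hτ, hlength⟩ :=
      hY.exists_tracksOn_of_dist_le hc.2 fun t ht ↦ hφ _ _ (hnear t ht)
    exact ⟨τ, hτ, hlength.trans le_add_self⟩
  · rintro c - d hd hexit hnear ⟨τ, hτ, hτ_length⟩
    obtain ⟨σ, hσ, hσ_length⟩ :=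
      hY.exists_tracksOn_of_dist_le hd.1 fun t ht ↦ hφ _ _ (hnear t ht)
    have piece_length : ENNReal.ofReal r ≤ eVariationOn γ (Icc c d) := by
      rw [← hexit, ← edist_dist]
      exact eVariationOn.edist_le γ (right_mem_Icc.2 hd.1) (left_mem_Icc.2 hd.1)
    have hσ_length' :
        eVariationOn σ (Icc c d) ≤ ENNReal.ofReal (C / r) * eVariationOn γ (Icc c d) :=
      calc eVariationOn σ (Icc c d)
        _ ≤ ENNReal.ofReal C := hσ_length
        _ = ENNReal.ofReal (C / r) * ENNReal.ofReal r := by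
          rw [← ENNReal.ofReal_mul' hr.le, div_mul_cancel₀ C hr.ne']
        _ ≤ ENNReal.ofReal (C / r) * eVariationOn γ (Icc c d) := by gcongr
    refine ⟨_, hσ.piecewise_Iic hτ hd.1 hd.2, ?_⟩
    rw [eVariationOn_piecewise_Iic hd.1 hd.2 (hσ.right_eq.trans hτ.left_eq.symm),
      ← eVariationOn_Icc_add_Icc γ hd.1 hd.2, mul_add, add_assoc]
    exact add_le_add hσ_length' hτ_length

end IsGeodesicSpace

theorem stmt16_general {X Y : Type*} [PseudoMetricSpace X] [MetricSpace Y]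
    (hY : IsGeodesicSpace Y) {k : ℝ} (hk : 0 < k) {φ : X → Y}
    (hφ : ∀ p q : X, (1 / k) * dist p q - k ≤ dist (φ p) (φ q) ∧
      dist (φ p) (φ q) ≤ k * dist p q + k)
    {x : X} {R a b : ℝ} (hab : a ≤ b) {γ : ℝ → X} (hγ : ContinuousOn γ (Icc a b))
    (havoid : ∀ t ∈ Icc a b, R ≤ dist x (γ t)) :
    ∃ γ' : ℝ → Y, ContinuousOn γ' (Icc a b) ∧ γ' a = φ (γ a) ∧ γ' b = φ (γ b) ∧
      (∀ t ∈ Icc a b, R / k - 3 * k ≤ dist (φ x) (γ' t)) ∧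
      hausdorffEDist (φ '' (γ '' Icc a b)) (γ' '' Icc a b) ≤ ENNReal.ofReal (2 * k) ∧
      eVariationOn γ' (Icc a b) ≤
        ENNReal.ofReal (2 * k) * eVariationOn γ (Icc a b) + ENNReal.ofReal (2 * k) := by
  have hφ_unit : ∀ p q, dist p q ≤ 1 → dist (φ p) (φ q) ≤ 2 * k := fun p q hpq ↦ by
    linarith [(hφ p q).2, mul_le_of_le_one_right hk.le hpq]
  have hφ_avoid : ∀ t ∈ Icc a b, R / k - k ≤ dist (φ x) (φ (γ t)) := fun t ht ↦
    calc R / k - k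
      _ ≤ dist x (γ t) / k - k := by gcongr; exact havoid t ht
      _ = 1 / k * dist x (γ t) - k := by ring
      _ ≤ dist (φ x) (φ (γ t)) := (hφ x (γ t)).1
  obtain ⟨γ', htracks, hlength⟩ := hY.exists_tracksOn_comp one_pos hφ_unit hγ hab
  refine ⟨γ', htracks.continuousOn, htracks.left_eq, htracks.right_eq, fun t ht ↦ ?_, ?_, ?_⟩
  · linarith [htracks.sub_le_dist hφ_avoid ht]
  · simpa only [image_comp] using htracks.hausdorffEDist_image_le
  · simpa only [div_one] using hlength

/-- Pushing forward a path avoiding a large ball through a `k`-quasiisometric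
embedding `φ : X → Y` of geodesic spaces: a finite-length continuous path `γ`
from `x₁` to `x₂` staying at distance at least `n` from `x` yields a
continuous path `γ'` in `Y` from `φ x₁` to `φ x₂` which stays at distance
greater than `(n−1)/k − 3k` from `φ x`, is at Hausdorff distance at most `4k`
from `φ(γ)`, and has length at most `2k·length(γ) + 2k`. -/
theorem stmt16 {X Y : Type*} [MetricSpace X] [MetricSpace Y]
    (hX : IsGeodesicSpace X) (hY : IsGeodesicSpace Y)
    (k : ℝ) (hk : 1 ≤ k) (φ : X → Y)
    (hφ : ∀ a b : X, (1 / k) * dist a b - k ≤ dist (φ a) (φ b) ∧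
        dist (φ a) (φ b) ≤ k * dist a b + k)
    (x x₁ x₂ : X) (n : ℕ) (hn : 1 ≤ n)
    (γ : ℝ → X) (hcont : ContinuousOn γ (Set.Icc 0 1))
    (h0 : γ 0 = x₁) (h1 : γ 1 = x₂)
    (hfin : eVariationOn γ (Set.Icc 0 1) < ⊤)
    (havoid : ∀ t ∈ Set.Icc (0 : ℝ) 1, (n : ℝ) ≤ dist x (γ t)) :
    ∃ γ' : ℝ → Y, ContinuousOn γ' (Set.Icc 0 1) ∧ γ' 0 = φ x₁ ∧ γ' 1 = φ x₂ ∧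
      (∀ t ∈ Set.Icc (0 : ℝ) 1, ((n : ℝ) - 1) / k - 3 * k < dist (φ x) (γ' t)) ∧
      EMetric.hausdorffEdist (φ '' (γ '' Set.Icc 0 1)) (γ' '' Set.Icc 0 1) ≤
        ENNReal.ofReal (4 * k) ∧
      eVariationOn γ' (Set.Icc 0 1) ≤
        ENNReal.ofReal (2 * k) * eVariationOn γ (Set.Icc 0 1) +
          ENNReal.ofReal (2 * k) := by
  subst h0 h1
  obtain ⟨γ', hcont', hγ'0, hγ'1, havoid', hclose, hlength⟩ :=
    stmt16_general hY (one_pos.trans_le hk) hφ zero_le_one hcont havoid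
  exact ⟨γ', hcont', hγ'0, hγ'1, fun t ht ↦ lt_of_lt_of_le (by gcongr; linarith) (havoid' t ht),
    hclose.trans (by gcongr; norm_num), hlength⟩
end
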